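/- Let 1 < α < 2, A a bounded operator on a Banach space E, u₀ ∈ E, and F : [0,∞) → E continuous. Then u(t) = E_α(t^α A) u₀ + ∫_0^t (t-τ)^{α-1} E_{α,α}((t-τ)^α A) F(τ) dτ satisfies the integral equation u(t) = u₀ + (1/Γ(α)) ∫_0^t (t-τ)^{α-1} (A u(τ) + F(τ)) dτ for all t ≥ 0. -/

import Mathlib

open Real MeasureTheory intervalIntegral

/-- Operator-valued two-parameter Mittag-Leffler function. -/
noncomputable def opML {E : Type*} [NormedAddCommGroup E] [NormedSpace ℝ E]
    (α β : ℝ) (A : E →L[ℝ] E) (t : ℝ) : E →L[ℝ] E :=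
  ∑' n : ℕ, (t ^ ((n : ℝ) * α) / Real.Gamma (β + n * α)) • A ^ n

/-!
Expanding the Mittag-Leffler series termwise, the convolution
`S_β f (t) = ∫₀ᵗ (t - τ)^(β - 1) E_{α,β}((t - τ)^α A) f(τ) dτ` is the series `∑ₙ Aⁿ J^(β + nα) f`
of Riemann–Liouville integrals. The semigroup law `J^γ J^β = J^(γ + β)` gives
`J^γ S_β = S_(γ + β)`, while splitting off the term `n = 0` gives `S_β f = J^β f + A S_(α + β) f`.
For `β = γ = α` together these say that `w = S_α f` solves `w = J^α (A w + f)`, which is the claim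
for zero initial data. The initial value reduces to this case because
`E_α(t^α A) u₀ = u₀ + S_α(A u₀)(t)`: thus `u = u₀ + w` with `w = S_α(A u₀ + F)`.
-/

section

open Set Filter Topology ContinuousLinearMap
open scoped Convolution

lemma rpow_mul_exp_neg_le_Gamma {R s : ℝ} (hR : 0 ≤ R) (hs : 1 ≤ s) :
    R ^ (s - 1) * exp (-R) ≤ Gamma s := by
  have hint := GammaIntegral_convergent (zero_lt_one.trans_le hs)
  have hsub : Ioi R ⊆ Ioi 0 := Ioi_subset_Ioi hR
  calc R ^ (s - 1) * exp (-R)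
      = ∫ x in Ioi R, exp (-x) * R ^ (s - 1) := by
        rw [MeasureTheory.integral_mul_const, integral_exp_neg_Ioi, mul_comm]
    _ ≤ ∫ x in Ioi R, exp (-x) * x ^ (s - 1) := by
        refine setIntegral_mono_on ((integrableOn_exp_neg_Ioi R).mul_const _)
          (hint.mono_set hsub) measurableSet_Ioi fun x hx => ?_
        have := rpow_le_rpow hR (le_of_lt hx) (sub_nonneg.2 hs)
        gcongr
    _ ≤ ∫ x in Ioi 0, exp (-x) * x ^ (s - 1) := by
        refine setIntegral_mono_set hint ?_ hsub.eventuallyLE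
        filter_upwards [ae_restrict_mem measurableSet_Ioi] with x hx
        exact mul_nonneg (exp_pos _).le (rpow_nonneg (le_of_lt hx) _)
    _ = Gamma s := (Gamma_eq_integral (zero_lt_one.trans_le hs)).symm

lemma summable_pow_div_Gamma {α : ℝ} (hα : 0 < α) (β x : ℝ) :
    Summable fun n : ℕ => x ^ n / Gamma (β + n * α) := by
  obtain ⟨R, hRx, hR⟩ : ∃ R : ℝ, |x| < R ^ α ∧ 0 < R :=
    (((tendsto_rpow_atTop hα).eventually_gt_atTop |x|).and (eventually_gt_atTop 0)).exists
  have hgeom : Summable fun n : ℕ => exp R / R ^ (β - 1) * (|x| / R ^ α) ^ n :=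
    (summable_geometric_of_lt_one (by positivity)
      ((div_lt_one (by positivity)).2 hRx)).mul_left _
  refine hgeom.of_norm_bounded_eventually_nat ?_
  have hlarge : ∀ᶠ n : ℕ in atTop, 1 ≤ β + n * α :=
    (tendsto_atTop_add_const_left _ β
      (tendsto_natCast_atTop_atTop.atTop_mul_const hα)).eventually_ge_atTop 1
  filter_upwards [hlarge] with n hn
  have hΓ := rpow_mul_exp_neg_le_Gamma hR.le hn
  rw [norm_div, norm_pow, norm_eq_abs, norm_of_nonneg (Gamma_pos_of_pos (by linarith)).le]
  calc |x| ^ n / Gamma (β + n * α)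
      ≤ |x| ^ n / (R ^ (β + n * α - 1) * exp (-R)) := by gcongr
    _ = exp R / R ^ (β - 1) * (|x| / R ^ α) ^ n := by
        rw [show β + n * α - 1 = (β - 1) + α * n by ring, rpow_add hR, rpow_mul hR.le,
          rpow_natCast, exp_neg, div_pow]
        field_simp

lemma integral_rpow_mul_sub_rpow {α β t : ℝ} (hα : 0 < α) (hβ : 0 < β) (ht : 0 < t) :
    ∫ τ in (0 : ℝ)..t, τ ^ (α - 1) * (t - τ) ^ (β - 1) =
      Gamma α * Gamma β / Gamma (α + β) * t ^ (α + β - 1) := by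
  apply Complex.ofReal_injective
  have hcast : ∀ τ ∈ uIcc 0 t, ((τ ^ (α - 1) * (t - τ) ^ (β - 1) : ℝ) : ℂ) =
      (τ : ℂ) ^ ((α : ℂ) - 1) * ((t : ℂ) - τ) ^ ((β : ℂ) - 1) := by
    intro τ hτ
    rw [uIcc_of_le ht.le] at hτ
    push_cast [Complex.ofReal_cpow hτ.1, Complex.ofReal_cpow (sub_nonneg.2 hτ.2)]
    rfl
  rw [← intervalIntegral.integral_ofReal, integral_congr hcast,
    Complex.betaIntegral_scaled _ _ ht,
    Complex.betaIntegral_eq_Gamma_mul_div _ _ (by simpa) (by simpa)]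
  push_cast [Complex.ofReal_cpow ht.le, ← Complex.Gamma_ofReal]
  ring

section RiemannLiouville

variable {E : Type*} [NormedAddCommGroup E] [NormedSpace ℝ E]

/-- The Riemann–Liouville fractional integral of order `β` based at `0`. -/
noncomputable def rlIntegral (β : ℝ) (f : ℝ → E) (t : ℝ) : E :=
  (1 / Gamma β) • ∫ τ in (0 : ℝ)..t, (t - τ) ^ (β - 1) • f τ

lemma rlIntegral_congr {f g : ℝ → E} (β : ℝ) {t : ℝ} (ht : 0 ≤ t) (hfg : EqOn f g (Icc 0 t)) :
    rlIntegral β f t = rlIntegral β g t := by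
  rw [rlIntegral, rlIntegral, integral_congr fun τ hτ => ?_]
  rw [hfg (uIcc_of_le ht ▸ hτ)]

lemma intervalIntegrable_sub_rpow {r : ℝ} (hr : -1 < r) (a b t : ℝ) :
    IntervalIntegrable (fun τ => (t - τ) ^ r) volume a b := by
  simpa using (intervalIntegrable_rpow' (a := t - a) (b := t - b) hr).comp_sub_left t

lemma intervalIntegrable_sub_rpow_smul {r t : ℝ} {f : ℝ → E} (hr : -1 < r) (ht : 0 ≤ t)
    (hf : ContinuousOn f (Ici 0)) :
    IntervalIntegrable (fun τ => (t - τ) ^ r • f τ) volume 0 t :=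
  (intervalIntegrable_sub_rpow hr 0 t t).smul_continuousOn
    (hf.mono (uIcc_of_le ht ▸ Icc_subset_Ici_self))

lemma rlIntegral_add {β t : ℝ} {f g : ℝ → E} (hβ : 0 < β) (ht : 0 ≤ t)
    (hf : ContinuousOn f (Ici 0)) (hg : ContinuousOn g (Ici 0)) :
    rlIntegral β (f + g) t = rlIntegral β f t + rlIntegral β g t := by
  have hr : -1 < β - 1 := by linarith
  simp only [rlIntegral, Pi.add_apply, smul_add]
  rw [integral_add (intervalIntegrable_sub_rpow_smul hr ht hf)
    (intervalIntegrable_sub_rpow_smul hr ht hg), smul_add]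

lemma rlIntegral_clm_comp {G : Type*} [NormedAddCommGroup G] [NormedSpace ℝ G] [CompleteSpace E]
    [CompleteSpace G] {β t : ℝ} {f : ℝ → E} (A : E →L[ℝ] G) (hβ : 0 < β) (ht : 0 ≤ t)
    (hf : ContinuousOn f (Ici 0)) :
    rlIntegral β (fun τ => A (f τ)) t = A (rlIntegral β f t) := by
  have hint := intervalIntegrable_sub_rpow_smul (show -1 < β - 1 by linarith) ht hf
  simp only [rlIntegral, map_smul, ← A.intervalIntegral_comp_comm hint]

lemma integral_sub_rpow {β : ℝ} (hβ : 0 < β) (t : ℝ) :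
    ∫ τ in (0 : ℝ)..t, (t - τ) ^ (β - 1) = t ^ β / β := by
  rw [integral_comp_sub_left fun τ => τ ^ (β - 1), sub_self, sub_zero,
    integral_rpow (Or.inl (by linarith)), sub_add_cancel, zero_rpow hβ.ne', sub_zero]

lemma rlIntegral_const [CompleteSpace E] {β : ℝ} (hβ : 0 < β) (v : E) (t : ℝ) :
    rlIntegral β (fun _ => v) t = (t ^ β / Gamma (β + 1)) • v := by
  rw [rlIntegral, intervalIntegral.integral_smul_const, integral_sub_rpow hβ, smul_smul,
    Gamma_add_one hβ.ne', div_mul_div_comm, one_mul, mul_comm β]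

lemma rlIntegral_smul_rpow {β γ t : ℝ} (hβ : 0 < β) (ht : 0 ≤ t) (f : ℝ → E) :
    rlIntegral β (fun τ => (Gamma β * ((t - τ) ^ γ / Gamma (β + γ))) • f τ) t =
      rlIntegral (β + γ) f t := by
  have hΓ := (Gamma_pos_of_pos hβ).ne'
  simp only [rlIntegral, ← intervalIntegral.integral_smul, smul_smul]
  refine integral_congr_Ioo_of_le ht fun τ hτ => ?_
  rw [show β + γ - 1 = (β - 1) + γ by ring, rpow_add (sub_pos.2 hτ.2)]
  field_simp

lemma norm_rlIntegral_le {β t C : ℝ} {f : ℝ → E} (hβ : 0 < β) (ht : 0 ≤ t)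
    (hfC : ∀ τ ∈ Icc 0 t, ‖f τ‖ ≤ C) :
    ‖rlIntegral β f t‖ ≤ t ^ β / Gamma (β + 1) * C := by
  have := Gamma_pos_of_pos hβ
  have hker := intervalIntegrable_sub_rpow (show -1 < β - 1 by linarith) 0 t t
  have hbound : ∀ τ ∈ Ioc 0 t, ‖(t - τ) ^ (β - 1) • f τ‖ ≤ (t - τ) ^ (β - 1) * C := by
    intro τ hτ
    have hnonneg := rpow_nonneg (sub_nonneg.2 hτ.2) (β - 1)
    rw [norm_smul, norm_of_nonneg hnonneg]
    gcongr
    exact hfC τ (Ioc_subset_Icc_self hτ)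
  calc ‖rlIntegral β f t‖
      ≤ 1 / Gamma β * ∫ τ in (0 : ℝ)..t, (t - τ) ^ (β - 1) * C := by
        rw [rlIntegral, norm_smul, norm_of_nonneg (by positivity)]
        gcongr
        exact norm_integral_le_of_norm_le ht (ae_of_all _ hbound) (hker.mul_const C)
    _ = t ^ β / Gamma (β + 1) * C := by
        rw [intervalIntegral.integral_mul_const, integral_sub_rpow hβ, Gamma_add_one hβ.ne']
        field_simp

lemma rlIntegral_eq_integral_zero_one {β t : ℝ} (hβ : 0 < β) (ht : 0 ≤ t) (f : ℝ → E) :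
    rlIntegral β f t =
      (t ^ β / Gamma β) • ∫ s in (0 : ℝ)..1, (1 - s) ^ (β - 1) • f (t * s) := by
  rcases ht.eq_or_lt with rfl | ht
  · simp [rlIntegral, zero_rpow hβ.ne']
  have hscale : ∫ τ in (0 : ℝ)..t, (t - τ) ^ (β - 1) • f τ =
      t • ∫ s in (0 : ℝ)..1, (t - t * s) ^ (β - 1) • f (t * s) := by
    simp [smul_integral_comp_mul_left fun τ => (t - τ) ^ (β - 1) • f τ]
  have hhom : ∀ s ∈ uIcc (0 : ℝ) 1,
      (t - t * s) ^ (β - 1) • f (t * s) = t ^ (β - 1) • (1 - s) ^ (β - 1) • f (t * s) := by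
    intro s hs
    rw [uIcc_of_le zero_le_one] at hs
    rw [← mul_one_sub, mul_rpow ht.le (sub_nonneg.2 hs.2), mul_smul]
  rw [rlIntegral, hscale, integral_congr hhom, intervalIntegral.integral_smul, smul_smul, smul_smul]
  congr 1
  rw [rpow_sub_one ht.ne']
  field_simp

lemma continuousOn_integral_smul_comp_mul {k : ℝ → ℝ} {f : ℝ → E}
    (hk : IntervalIntegrable k volume 0 1) (hf : ContinuousOn f (Ici 0)) :
    ContinuousOn (fun t => ∫ s in (0 : ℝ)..1, k s • f (t * s)) (Ici 0) := by
  intro t₀ ht₀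
  obtain ⟨C, hC⟩ := isCompact_Icc.exists_bound_of_continuousOn
    (hf.mono (Icc_subset_Ici_self : Icc 0 (t₀ + 1) ⊆ Ici 0))
  have hnear : ∀ᶠ t in 𝓝[Ici 0] t₀, t ∈ Icc 0 (t₀ + 1) :=
    inter_mem self_mem_nhdsWithin (mem_nhdsWithin_of_mem_nhds (Iic_mem_nhds (lt_add_one t₀)))
  refine continuousWithinAt_of_dominated_interval (bound := fun s => ‖k s‖ * C)
    ?_ ?_ (hk.norm.mul_const C) (ae_of_all _ fun s hs => ?_)
  · filter_upwards [hnear] with t ht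
    have hft : ContinuousOn (fun s => f (t * s)) (uIcc 0 1) :=
      hf.comp (by fun_prop) fun s hs =>
        mul_nonneg ht.1 (uIcc_of_le (zero_le_one (α := ℝ)) ▸ hs).1
    exact (hk.smul_continuousOn hft).def'.aestronglyMeasurable
  · filter_upwards [hnear] with t ht
    refine ae_of_all _ fun s hs => ?_
    rw [uIoc_of_le zero_le_one] at hs
    rw [norm_smul]
    gcongr
    exact hC _ ⟨mul_nonneg ht.1 hs.1.le, (mul_le_of_le_one_right ht.1 hs.2).trans ht.2⟩
  · rw [uIoc_of_le zero_le_one] at hs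
    have hft : ContinuousOn (fun t => f (t * s)) (Ici 0) :=
      hf.comp (by fun_prop) fun t ht => mul_nonneg ht hs.1.le
    exact (hft t₀ ht₀).const_smul (k s)

lemma continuousOn_rlIntegral {β : ℝ} {f : ℝ → E} (hβ : 0 < β) (hf : ContinuousOn f (Ici 0)) :
    ContinuousOn (rlIntegral β f) (Ici 0) := by
  have hker := intervalIntegrable_sub_rpow (show -1 < β - 1 by linarith) 0 1 1
  have hscale : Continuous fun t : ℝ => t ^ β / Gamma β :=
    (continuous_id.rpow_const fun _ => Or.inr hβ.le).div_const _
  exact (hscale.continuousOn.smul (continuousOn_integral_smul_comp_mul hker hf)).congr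
    fun t ht => rlIntegral_eq_integral_zero_one hβ ht f

/-- The Riemann–Liouville kernel `t₊ ^ (β - 1) / Γ(β)`: convolution with it is the fractional
integral of order `β`. It vanishes for `t ≤ 0`, where `rpow` takes junk values. -/
noncomputable def rlKernel (β : ℝ) : ℝ → ℝ :=
  (Ioi 0).indicator fun t => t ^ (β - 1) / Gamma β

lemma rlKernel_nonneg {β : ℝ} (hβ : 0 < β) (t : ℝ) : 0 ≤ rlKernel β t :=
  indicator_nonneg (fun _ hs => div_nonneg (rpow_nonneg (le_of_lt hs) _)
    (Gamma_pos_of_pos hβ).le) t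

lemma measurable_rlKernel (β : ℝ) : Measurable (rlKernel β) :=
  ((measurable_id.pow_const _).div_const _).indicator measurableSet_Ioi

lemma rlKernel_convolution_indicator (β : ℝ) (f : ℝ → E) :
    rlKernel β ⋆[lsmul ℝ ℝ] (Ioi 0).indicator f = (Ioi 0).indicator (rlIntegral β f) := by
  rw [rlKernel, ← posConvolution_eq_convolution_indicator (ν := volume), posConvolution]
  congr 1 with t
  have hflip := integral_comp_sub_left (a := 0) (b := t)
    (fun s => (s ^ (β - 1) / Gamma β) • f (t - s)) t
  simp only [sub_sub_cancel, sub_self, sub_zero] at hflip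
  simp only [lsmul_apply, ← hflip, rlIntegral, ← intervalIntegral.integral_smul, smul_smul,
    one_div_mul_eq_div]

lemma rlKernel_convolution_rlKernel {α β : ℝ} (hα : 0 < α) (hβ : 0 < β) :
    rlKernel α ⋆[mul ℝ ℝ] rlKernel β = rlKernel (α + β) := by
  have := Gamma_pos_of_pos hα
  have := Gamma_pos_of_pos hβ
  rw [rlKernel, rlKernel, rlKernel, ← posConvolution_eq_convolution_indicator (ν := volume),
    posConvolution]
  refine indicator_congr fun t ht => ?_
  simp only [mul_apply', div_mul_div_comm]
  rw [intervalIntegral.integral_div, integral_rpow_mul_sub_rpow hα hβ ht]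
  field_simp

lemma convolutionExistsAt_indicator_Ioi_iff {E₁ E₂ E₃ : Type*} [NormedAddCommGroup E₁]
    [NormedSpace ℝ E₁] [NormedAddCommGroup E₂] [NormedSpace ℝ E₂] [NormedAddCommGroup E₃]
    [NormedSpace ℝ E₃] {f : ℝ → E₁} {g : ℝ → E₂} {L : E₁ →L[ℝ] E₂ →L[ℝ] E₃} {t : ℝ} :
    ConvolutionExistsAt ((Ioi 0).indicator f) ((Ioi 0).indicator g) t L ↔
      IntegrableOn (fun s => L (f s) (g (t - s))) (Ioo 0 t) := by
  rw [ConvolutionExistsAt, ← integrable_indicator_iff measurableSet_Ioo]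
  congr! 2 with s
  by_cases hs : 0 < s <;> by_cases hst : s < t <;> simp [hs, hst]

lemma convolutionExistsAt_rlKernel_rlKernel {α β : ℝ} (hα : 0 < α) (hβ : 0 < β) (t : ℝ) :
    ConvolutionExistsAt (rlKernel α) (rlKernel β) t (mul ℝ ℝ) := by
  rw [rlKernel, rlKernel, convolutionExistsAt_indicator_Ioi_iff]
  rcases le_or_gt t 0 with ht | ht
  · simp [Ioo_eq_empty ht.not_gt]
  have hne : ∫ τ in (0 : ℝ)..t, τ ^ (α - 1) * (t - τ) ^ (β - 1) ≠ 0 := by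
    rw [integral_rpow_mul_sub_rpow hα hβ ht]
    have := Gamma_pos_of_pos hα
    have := Gamma_pos_of_pos hβ
    have := Gamma_pos_of_pos (add_pos hα hβ)
    positivity
  have hint := (intervalIntegrable_of_integral_ne_zero hne).div_const (Gamma α * Gamma β)
  rw [intervalIntegrable_iff_integrableOn_Ioo_of_le ht.le] at hint
  simpa only [mul_apply', div_mul_div_comm] using hint

lemma convolutionExistsAt_rlKernel_indicator {β : ℝ} {f : ℝ → E} (hβ : 0 < β)
    (hf : ContinuousOn f (Ici 0)) (t : ℝ) :
    ConvolutionExistsAt (rlKernel β) ((Ioi 0).indicator f) t (lsmul ℝ ℝ) := by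
  rw [rlKernel, convolutionExistsAt_indicator_Ioi_iff]
  rcases le_or_gt t 0 with ht | ht
  · simp [Ioo_eq_empty ht.not_gt]
  have hint := ((intervalIntegrable_sub_rpow_smul (show -1 < β - 1 by linarith) ht.le
    hf).comp_sub_left t).symm.smul (Gamma β)⁻¹
  rw [sub_self, sub_zero, intervalIntegrable_iff_integrableOn_Ioo_of_le ht.le] at hint
  simpa [div_eq_inv_mul, mul_smul, Pi.smul_def] using hint

lemma rlIntegral_rlIntegral [CompleteSpace E] {α β t : ℝ} {f : ℝ → E} (hα : 0 < α) (hβ : 0 < β)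
    (ht : 0 ≤ t) (hf : ContinuousOn f (Ici 0)) :
    rlIntegral α (rlIntegral β f) t = rlIntegral (α + β) f t := by
  rcases ht.eq_or_lt with rfl | ht
  · simp [rlIntegral]
  have hnorm_rlKernel (γ : ℝ) (hγ : 0 < γ) : (fun s => ‖rlKernel γ s‖) = rlKernel γ :=
    funext fun s => norm_of_nonneg (rlKernel_nonneg hγ s)
  have hnorm_indicator : (fun s => ‖(Ioi 0).indicator f s‖) = (Ioi 0).indicator (‖f ·‖) :=
    funext fun s => norm_indicator_eq_indicator_norm f s
  have hmul : mul ℝ ℝ = lsmul ℝ ℝ := by ext; simp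
  have hassoc : (rlKernel α ⋆[mul ℝ ℝ] rlKernel β) ⋆[lsmul ℝ ℝ] (Ioi 0).indicator f =
      rlKernel α ⋆[lsmul ℝ ℝ] rlKernel β ⋆[lsmul ℝ ℝ] (Ioi 0).indicator f := by
    ext x
    refine convolution_assoc _ _ _ _ (fun _ _ _ => mul_smul _ _ _)
      (measurable_rlKernel α).aestronglyMeasurable (measurable_rlKernel β).aestronglyMeasurable
      ((aestronglyMeasurable_indicator_iff measurableSet_Ioi).2
        ((hf.mono Ioi_subset_Ici_self).aestronglyMeasurable measurableSet_Ioi))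
      (ae_of_all _ (convolutionExistsAt_rlKernel_rlKernel hα hβ)) ?_ ?_
    · rw [hnorm_rlKernel β hβ, hnorm_indicator, hmul]
      exact ae_of_all _ (convolutionExistsAt_rlKernel_indicator hβ hf.norm)
    · rw [hnorm_rlKernel α hα, hnorm_rlKernel β hβ, hnorm_indicator, hmul,
        rlKernel_convolution_indicator]
      exact convolutionExistsAt_rlKernel_indicator hα (continuousOn_rlIntegral hβ hf.norm) x
  rw [rlKernel_convolution_rlKernel hα hβ, rlKernel_convolution_indicator,
    rlKernel_convolution_indicator, rlKernel_convolution_indicator] at hassoc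
  simpa [ht] using (congrFun hassoc t).symm

lemma hasSum_rlIntegral {β t : ℝ} {f : ℕ → ℝ → E} {g : ℝ → E} {c : ℕ → ℝ} (hβ : 0 < β)
    (ht : 0 ≤ t) (hf : ∀ n, ContinuousOn (f n) (Ici 0)) (hfc : ∀ n, ∀ τ ∈ Icc 0 t, ‖f n τ‖ ≤ c n)
    (hc : Summable c) (hg : ∀ τ ∈ Icc 0 t, HasSum (f · τ) (g τ)) :
    HasSum (fun n => rlIntegral β (f n) t) (rlIntegral β g t) := by
  have hr : -1 < β - 1 := by linarith
  have hIoc : uIoc 0 t ⊆ Icc 0 t := uIoc_of_le ht ▸ Ioc_subset_Icc_self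
  refine (hasSum_integral_of_dominated_convergence (fun n τ => (t - τ) ^ (β - 1) * c n)
    (fun n => (intervalIntegrable_sub_rpow_smul hr ht (hf n)).def'.aestronglyMeasurable)
    (fun n => ae_of_all _ fun τ hτ => ?_) (ae_of_all _ fun τ _ => hc.mul_left _) ?_
    (ae_of_all _ fun τ hτ => (hg τ (hIoc hτ)).const_smul _)).const_smul _
  · have hnonneg := rpow_nonneg (sub_nonneg.2 (hIoc hτ).2) (β - 1)
    rw [norm_smul, norm_of_nonneg hnonneg]
    gcongr
    exact hfc n τ (hIoc hτ)
  · simp only [tsum_mul_left]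
    exact (intervalIntegrable_sub_rpow hr 0 t t).mul_const _

end RiemannLiouville

section MittagLeffler

variable {E : Type*} [NormedAddCommGroup E] [NormedSpace ℝ E]

/-- The convolution `∫₀ᵗ (t - τ)^(β - 1) E_{α,β}((t - τ)^α A) f(τ) dτ`; `β = α` gives
the forcing term of Duhamel's formula, and fractional integration of order `γ` sends `β` to
`γ + β`. -/
noncomputable def mittagLefflerIntegral (α β : ℝ) (A : E →L[ℝ] E) (f : ℝ → E) (t : ℝ) : E :=
  ∫ τ in (0 : ℝ)..t, (t - τ) ^ (β - 1) • opML α β A (t - τ) (f τ)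

variable (A : E →L[ℝ] E) {α β t : ℝ} {f g : ℝ → E}

lemma norm_clm_pow_le (n : ℕ) : ‖A ^ n‖ ≤ ‖A‖ ^ n := by
  rcases n.eq_zero_or_pos with rfl | hn
  · simpa using! norm_id_le (𝕜 := ℝ) (E := E)
  · exact norm_pow_le' A hn

lemma norm_opML_term_le {T : ℝ} (hα : 0 < α) (hβ : 0 < β) (ht : t ∈ Icc 0 T) (n : ℕ) :
    ‖(t ^ (n * α) / Gamma (β + n * α)) • A ^ n‖ ≤ (T ^ α * ‖A‖) ^ n / Gamma (β + n * α) := by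
  have hΓ : 0 < Gamma (β + n * α) := Gamma_pos_of_pos (by positivity)
  have hT : 0 ≤ T := ht.1.trans ht.2
  rw [norm_smul, norm_of_nonneg (div_nonneg (rpow_nonneg ht.1 _) hΓ.le), mul_pow,
    ← rpow_mul_natCast hT, mul_comm α, div_mul_eq_mul_div]
  gcongr
  · exact ht.1
  · exact ht.2
  · exact norm_clm_pow_le A n

lemma exists_summable_bound_pow_rlIntegral (hα : 0 < α) (hβ : 0 < β)
    (hf : ContinuousOn f (Ici 0)) (T : ℝ) :
    ∃ c : ℕ → ℝ, Summable c ∧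
      ∀ n : ℕ, ∀ τ ∈ Icc 0 T, ‖(A ^ n) (rlIntegral (β + n * α) f τ)‖ ≤ c n := by
  obtain ⟨C, hC⟩ := isCompact_Icc.exists_bound_of_continuousOn
    (hf.mono (Icc_subset_Ici_self : Icc 0 T ⊆ Ici 0))
  refine ⟨fun n => (T ^ α * ‖A‖) ^ n / Gamma (β + 1 + n * α) * (T ^ β * C),
    (summable_pow_div_Gamma hα (β + 1) _).mul_right _, fun n τ hτ => ?_⟩
  have hT : 0 ≤ T := hτ.1.trans hτ.2
  have hC₀ : 0 ≤ C := (norm_nonneg _).trans (hC τ hτ)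
  have hβn : 0 < β + n * α := by positivity
  have := Gamma_pos_of_pos (add_pos hβn one_pos)
  calc ‖(A ^ n) (rlIntegral (β + n * α) f τ)‖
      ≤ ‖A‖ ^ n * (τ ^ (β + n * α) / Gamma (β + n * α + 1) * C) :=
        le_of_opNorm_le_of_le _ (norm_clm_pow_le A n)
          (norm_rlIntegral_le hβn hτ.1 fun s hs => hC s ⟨hs.1, hs.2.trans hτ.2⟩)
    _ ≤ ‖A‖ ^ n * (T ^ (β + n * α) / Gamma (β + n * α + 1) * C) := by
        gcongr
        exacts [hτ.1, hτ.2]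
    _ = (T ^ α * ‖A‖) ^ n / Gamma (β + 1 + n * α) * (T ^ β * C) := by
        rw [rpow_add_of_nonneg hT hβ.le (by positivity), mul_pow, ← rpow_mul_natCast hT,
          mul_comm α, add_right_comm]
        ring

variable [CompleteSpace E]

lemma hasSum_opML (hα : 0 < α) (hβ : 0 < β) (ht : 0 ≤ t) :
    HasSum (fun n : ℕ => (t ^ (n * α) / Gamma (β + n * α)) • A ^ n) (opML α β A t) :=
  (Summable.of_norm_bounded (summable_pow_div_Gamma hα β _)
    (norm_opML_term_le A hα hβ ⟨ht, le_rfl⟩)).hasSum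

variable {A}

lemma hasSum_mittagLefflerIntegral (hα : 0 < α) (hβ : 0 < β) (ht : 0 ≤ t)
    (hf : ContinuousOn f (Ici 0)) :
    HasSum (fun n : ℕ => (A ^ n) (rlIntegral (β + n * α) f t))
      (mittagLefflerIntegral α β A f t) := by
  -- The factor `Gamma β` cancels the normalization of `rlIntegral β`.
  let kernelTerm (n : ℕ) (τ : ℝ) : E :=
    (Gamma β * ((t - τ) ^ (n * α) / Gamma (β + n * α))) • (A ^ n) (f τ)
  have hterm (n : ℕ) : rlIntegral β (kernelTerm n) t = (A ^ n) (rlIntegral (β + n * α) f t) := by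
    rw [rlIntegral_smul_rpow hβ ht, rlIntegral_clm_comp _ (by positivity) ht hf]
  have hcont (n : ℕ) : ContinuousOn (kernelTerm n) (Ici 0) := by
    have hpow : Continuous fun τ : ℝ => (t - τ) ^ (n * α) :=
      (continuous_const.sub continuous_id).rpow_const fun _ => Or.inr (by positivity)
    exact (continuous_const.mul (hpow.div_const _)).continuousOn.smul
      ((A ^ n).continuous.comp_continuousOn hf)
  obtain ⟨C, hC⟩ := isCompact_Icc.exists_bound_of_continuousOn
    (hf.mono (Icc_subset_Ici_self : Icc 0 t ⊆ Ici 0))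
  have hbound (n : ℕ) : ∀ τ ∈ Icc 0 t,
      ‖kernelTerm n τ‖ ≤ Gamma β * ((t ^ α * ‖A‖) ^ n / Gamma (β + n * α) * C) := by
    intro τ hτ
    have hop := norm_opML_term_le A hα hβ ⟨sub_nonneg.2 hτ.2, sub_le_self t hτ.1⟩ n
    have happ : kernelTerm n τ =
      Gamma β • (((t - τ) ^ (n * α) / Gamma (β + n * α)) • A ^ n) (f τ) := mul_smul _ _ _
    rw [happ, norm_smul, norm_of_nonneg (Gamma_pos_of_pos hβ).le]
    gcongr
    exact ContinuousLinearMap.le_of_opNorm_le_of_le _ hop (hC τ hτ)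
  have hpointwise : ∀ τ ∈ Icc 0 t,
      HasSum (kernelTerm · τ) (Gamma β • opML α β A (t - τ) (f τ)) := by
    intro τ hτ
    have hsum := (hasSum_opML A hα hβ (sub_nonneg.2 hτ.2)).mapL (apply ℝ E (f τ))
    simpa [kernelTerm, mul_smul] using hsum.const_smul (Gamma β)
  have hsum := hasSum_rlIntegral hβ ht hcont hbound
    (((summable_pow_div_Gamma hα β _).mul_right C).mul_left _) hpointwise
  simp only [hterm] at hsum
  have hΓ := (Gamma_pos_of_pos hβ).ne'
  convert hsum using 1
  simp [rlIntegral, mittagLefflerIntegral, smul_comm _ (Gamma β), hΓ]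

lemma mittagLefflerIntegral_add (hα : 0 < α) (hβ : 0 < β) (ht : 0 ≤ t)
    (hf : ContinuousOn f (Ici 0)) (hg : ContinuousOn g (Ici 0)) :
    mittagLefflerIntegral α β A (f + g) t =
      mittagLefflerIntegral α β A f t + mittagLefflerIntegral α β A g t := by
  refine (hasSum_mittagLefflerIntegral hα hβ ht (hf.add hg)).unique ?_
  have hterm (n : ℕ) : (A ^ n) (rlIntegral (β + n * α) (f + g) t) =
      (A ^ n) (rlIntegral (β + n * α) f t) + (A ^ n) (rlIntegral (β + n * α) g t) := by
    rw [rlIntegral_add (by positivity) ht hf hg, map_add]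
  simpa only [hterm] using
    (hasSum_mittagLefflerIntegral hα hβ ht hf).add (hasSum_mittagLefflerIntegral hα hβ ht hg)

lemma mittagLefflerIntegral_eq_add (hα : 0 < α) (hβ : 0 < β) (ht : 0 ≤ t)
    (hf : ContinuousOn f (Ici 0)) :
    mittagLefflerIntegral α β A f t =
      rlIntegral β f t + A (mittagLefflerIntegral α (α + β) A f t) := by
  let term (n : ℕ) : E := (A ^ n) (rlIntegral (β + n * α) f t)
  have hterm_succ (n : ℕ) : term (n + 1) = A ((A ^ n) (rlIntegral (α + β + n * α) f t)) := by
    simp only [term]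
    rw [show α + β + n * α = β + ↑(n + 1) * α by push_cast; ring, pow_succ']
    rfl
  have htail : HasSum (fun n => term (n + 1)) (A (mittagLefflerIntegral α (α + β) A f t)) := by
    simpa only [hterm_succ] using
      (hasSum_mittagLefflerIntegral hα (add_pos hα hβ) ht hf).mapL A
  have hterm_zero : term 0 = rlIntegral β f t := by simp [term]
  rw [← hterm_zero]
  exact (hasSum_mittagLefflerIntegral hα hβ ht hf).unique htail.zero_add

lemma opML_one_apply (hα : 0 < α) (ht : 0 ≤ t) (v : E) :
    opML α 1 A t v = v + mittagLefflerIntegral α α A (fun _ => A v) t := by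
  let term (n : ℕ) : E := (t ^ (n * α) / Gamma (1 + n * α)) • (A ^ n) v
  have hterm_succ (n : ℕ) :
      term (n + 1) = (A ^ n) (rlIntegral (α + n * α) (fun _ => A v) t) := by
    simp only [term]
    rw [rlIntegral_const (by positivity), map_smul, pow_succ,
      show α + n * α + 1 = 1 + ↑(n + 1) * α by push_cast; ring,
      show α + n * α = ↑(n + 1) * α by push_cast; ring]
    rfl
  have htail : HasSum (fun n => term (n + 1)) (mittagLefflerIntegral α α A (fun _ => A v) t) := by
    simpa only [hterm_succ] using hasSum_mittagLefflerIntegral hα hα ht continuousOn_const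
  have hterm_zero : term 0 = v := by simp [term]
  have hsum : HasSum term (opML α 1 A t v) := (hasSum_opML A hα one_pos ht).mapL (apply ℝ E v)
  simpa only [hterm_zero] using hsum.unique htail.zero_add

lemma continuousOn_mittagLefflerIntegral (hα : 0 < α) (hβ : 0 < β)
    (hf : ContinuousOn f (Ici 0)) :
    ContinuousOn (mittagLefflerIntegral α β A f) (Ici 0) := by
  intro t₀ ht₀
  obtain ⟨c, hc, hbound⟩ := exists_summable_bound_pow_rlIntegral A hα hβ hf (t₀ + 1)
  have hseries : ContinuousOn (fun t => ∑' n : ℕ, (A ^ n) (rlIntegral (β + n * α) f t))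
      (Icc 0 (t₀ + 1)) :=
    continuousOn_tsum (fun n => (A ^ n).continuous.comp_continuousOn
      ((continuousOn_rlIntegral (by positivity) hf).mono Icc_subset_Ici_self)) hc hbound
  have hcont : ContinuousOn (mittagLefflerIntegral α β A f) (Icc 0 (t₀ + 1)) :=
    hseries.congr fun t ht => (hasSum_mittagLefflerIntegral hα hβ ht.1 hf).tsum_eq.symm
  exact (hcont t₀ ⟨ht₀, (lt_add_one t₀).le⟩).mono_of_mem_nhdsWithin
    (inter_mem self_mem_nhdsWithin (mem_nhdsWithin_of_mem_nhds (Iic_mem_nhds (lt_add_one t₀))))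

lemma rlIntegral_mittagLefflerIntegral {γ : ℝ} (hα : 0 < α) (hβ : 0 < β) (hγ : 0 < γ)
    (ht : 0 ≤ t) (hf : ContinuousOn f (Ici 0)) :
    rlIntegral γ (mittagLefflerIntegral α β A f) t =
      mittagLefflerIntegral α (γ + β) A f t := by
  obtain ⟨c, hc, hbound⟩ := exists_summable_bound_pow_rlIntegral A hα hβ hf t
  have hcont (n : ℕ) : ContinuousOn (rlIntegral (β + n * α) f) (Ici 0) :=
    continuousOn_rlIntegral (by positivity) hf
  have hterm (n : ℕ) : rlIntegral γ (fun τ => (A ^ n) (rlIntegral (β + n * α) f τ)) t =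
      (A ^ n) (rlIntegral (γ + β + n * α) f t) := by
    rw [rlIntegral_clm_comp _ hγ ht (hcont n), rlIntegral_rlIntegral hγ (by positivity) ht hf,
      add_assoc]
  have hsum : HasSum (fun n : ℕ => (A ^ n) (rlIntegral (γ + β + n * α) f t))
      (rlIntegral γ (mittagLefflerIntegral α β A f) t) := by
    simp only [← hterm]
    exact hasSum_rlIntegral hγ ht (fun n => (A ^ n).continuous.comp_continuousOn (hcont n))
      hbound hc fun τ hτ => hasSum_mittagLefflerIntegral hα hβ hτ.1 hf
  exact hsum.unique (hasSum_mittagLefflerIntegral hα (add_pos hγ hβ) ht hf)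

lemma mittagLefflerIntegral_eq_rlIntegral (hα : 0 < α) (ht : 0 ≤ t)
    (hf : ContinuousOn f (Ici 0)) :
    mittagLefflerIntegral α α A f t =
      rlIntegral α (f + fun τ => A (mittagLefflerIntegral α α A f τ)) t := by
  have hcont : ContinuousOn (mittagLefflerIntegral α α A f) (Ici 0) :=
    continuousOn_mittagLefflerIntegral hα hα hf
  have hAcont : ContinuousOn (fun τ => A (mittagLefflerIntegral α α A f τ)) (Ici 0) :=
    A.continuous.comp_continuousOn hcont
  rw [rlIntegral_add hα ht hf hAcont, rlIntegral_clm_comp A hα ht hcont,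
    rlIntegral_mittagLefflerIntegral hα hα hα ht hf, ← mittagLefflerIntegral_eq_add hα hα ht hf]

end MittagLeffler

theorem duhamel_integral_equation_general {E : Type*} [NormedAddCommGroup E] [NormedSpace ℝ E]
    [CompleteSpace E] {α : ℝ} (hα : 0 < α) (A : E →L[ℝ] E) (u₀ : E) {F u : ℝ → E}
    (hF : ContinuousOn F (Ici 0))
    (hu : ∀ t ≥ 0, u t = opML α 1 A t u₀
        + ∫ τ in (0 : ℝ)..t, (t - τ) ^ (α - 1) • opML α α A (t - τ) (F τ)) :
    ∀ t ≥ 0, u t = u₀ + (1 / Gamma α) •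
        ∫ τ in (0 : ℝ)..t, (t - τ) ^ (α - 1) • (A (u τ) + F τ) := by
  intro t ht
  let G : ℝ → E := (fun _ => A u₀) + F
  have hu_eq : ∀ τ ≥ 0, u τ = u₀ + mittagLefflerIntegral α α A G τ := by
    intro τ hτ
    rw [mittagLefflerIntegral_add hα hα hτ continuousOn_const hF, ← add_assoc,
      ← opML_one_apply hα hτ, hu τ hτ, mittagLefflerIntegral]
  have hforcing : EqOn (G + fun τ => A (mittagLefflerIntegral α α A G τ))
      (fun τ => A (u τ) + F τ) (Icc 0 t) := by
    intro τ hτ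
    simp only [Pi.add_apply, G, hu_eq τ hτ.1, map_add]
    abel
  calc u t = u₀ + mittagLefflerIntegral α α A G t := hu_eq t ht
    _ = u₀ + rlIntegral α (G + fun τ => A (mittagLefflerIntegral α α A G τ)) t := by
        rw [← mittagLefflerIntegral_eq_rlIntegral hα ht (continuousOn_const.add hF)]
    _ = u₀ + rlIntegral α (fun τ => A (u τ) + F τ) t := by rw [rlIntegral_congr α ht hforcing]

end

/-- Variation-of-constants (Duhamel) formula: for `1 < α < 2`, bounded `A`, `u₀ ∈ E` and
continuous `F`, the function
`u(t) = E_α(t^α A) u₀ + ∫_0^t (t-τ)^{α-1} E_{α,α}((t-τ)^α A) F(τ) dτ` satisfies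
`u(t) = u₀ + (1/Γ(α)) ∫_0^t (t-τ)^{α-1} (A u(τ) + F(τ)) dτ` for all `t ≥ 0`. -/
theorem duhamel_integral_equation {E : Type*} [NormedAddCommGroup E] [NormedSpace ℝ E]
    [CompleteSpace E]
    (α : ℝ) (hα₁ : 1 < α) (hα₂ : α < 2) (A : E →L[ℝ] E) (u₀ : E)
    (F : ℝ → E) (hF : Continuous F)
    (u : ℝ → E)
    (hu : ∀ t : ℝ, u t = opML α 1 A t u₀
        + ∫ τ in (0:ℝ)..t, (t - τ) ^ (α - 1) • opML α α A (t - τ) (F τ)) :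
    ∀ t ≥ (0 : ℝ),
      u t = u₀ + (1 / Real.Gamma α) •
        ∫ τ in (0:ℝ)..t, (t - τ) ^ (α - 1) • (A (u τ) + F τ) := by
  exact duhamel_integral_equation_general (by linarith) A u₀ hF.continuousOn fun t _ => hu t
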